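/- Let {n_k} satisfy sup_k V(n_k) = ∞. Then there exists a martingale F ∈ H_{1/2}(G) such that ω_{H_{1/2}}(1/2^{|n_k|}, F) = O(1/V(n_k)^2) as k → ∞, yet ‖σ_{n_k}F − F‖_{1/2} does not tend to 0. -/

import Mathlib

open MeasureTheory Filter Topology ENNReal NNReal

noncomputable section

/-- The dyadic group `G = (ℤ/2)^ℕ`. -/
abbrev G : Type := ℕ → ZMod 2

instance : TopologicalSpace (ZMod 2) := ⊥
instance : DiscreteTopology (ZMod 2) := ⟨rfl⟩
instance : MeasurableSpace G := borel G
instance : BorelSpace G := ⟨rfl⟩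

/-- Normalized Haar measure on `G`. -/
def μG : Measure G := Measure.addHaarMeasure ⟨⟨Set.univ, isCompact_univ⟩, by simp⟩

/-- Cylinder `I_n(x) = {y : y_0 = x_0, ..., y_{n-1} = x_{n-1}}`. -/
def cyl (n : ℕ) (x : G) : Set G := {y | ∀ k < n, y k = x k}

/-- `I_n = I_n(0)`. -/
def I₀ (n : ℕ) : Set G := cyl n 0

/-- `e t`: the element of `G` with a single 1 in coordinate `t`. -/
def e (t : ℕ) : G := fun k => if k = t then 1 else 0

/-- Rademacher functions `r_k(x) = (-1)^{x_k}`. -/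
def rade (k : ℕ) (x : G) : ℝ := (-1 : ℝ) ^ (x k).val

/-- Walsh functions `w_n = ∏ r_k^{n_k}` (binary digits `n_k` of `n`). -/
def walsh (n : ℕ) (x : G) : ℝ :=
  ∏ k ∈ Finset.range (n + 1), if n.testBit k then rade k x else 1

/-- Walsh–Dirichlet kernel `D_n = ∑_{k<n} w_k`. -/
def D (n : ℕ) (x : G) : ℝ := ∑ k ∈ Finset.range n, walsh k x

/-- Walsh–Fejér kernel `K_n = (1/n) ∑_{k=1}^n D_k`. -/
def K (n : ℕ) (x : G) : ℝ := (1 / n) * ∑ k ∈ Finset.Icc 1 n, D k x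

/-- Binary variation `V(n) = n_0 + ∑_{k≥1} |n_k - n_{k-1}|`. -/
def V (n : ℕ) : ℕ :=
  (if n.testBit 0 then 1 else 0) +
    ∑ k ∈ Finset.Icc 1 (n + 1), if n.testBit k ≠ n.testBit (k - 1) then 1 else 0

/-- `|n|`: index of the highest nonzero binary digit of `n`. -/
def hi (n : ℕ) : ℕ := Nat.log 2 n

/-- `[n]`: index of the lowest nonzero binary digit of `n`. -/
def lo (n : ℕ) : ℕ := padicValNat 2 n

/-- `d(n) = |n| - [n]`. -/
def dd (n : ℕ) : ℕ := hi n - lo n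

/-- A dyadic martingale: `F n` depends only on the first `n` coordinates, and
`F n` is the average of the two possible extensions, i.e. the martingale property
with respect to the dyadic filtration. -/
def IsDyadicMartingale (F : ℕ → G → ℝ) : Prop :=
  (∀ n x y, (∀ k < n, x k = y k) → F n x = F n y) ∧
  (∀ n x, F n x = (F (n+1) x + F (n+1) (Function.update x n (x n + 1))) / 2)

/-- `k`-th Walsh–Fourier coefficient of a martingale,
`F̂(k) = lim_n ∫ F_n w_k dμ` (the integrals are eventually constant). -/
def mcoeff (F : ℕ → G → ℝ) (k : ℕ) : ℝ := ∫ x, F (k+1) x * walsh k x ∂μG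

/-- Partial sums `S_m F` of the Walsh–Fourier series of a martingale. -/
def S (F : ℕ → G → ℝ) (m : ℕ) (x : G) : ℝ := ∑ j ∈ Finset.range m, mcoeff F j * walsh j x

/-- Fejér means `σ_n F = (1/n) ∑_{k=1}^n S_k F`. -/
def σ (F : ℕ → G → ℝ) (n : ℕ) (x : G) : ℝ := (1 / n) * ∑ k ∈ Finset.Icc 1 n, S F k x

/-- `H_p` quasi-norm of a martingale: `‖sup_n |F_n|‖_{L_p}`. -/
def HpNorm (p : ℝ) (F : ℕ → G → ℝ) : ℝ≥0∞ :=
  (∫⁻ x, (⨆ n, (‖F n x‖₊ : ℝ≥0∞)) ^ p ∂μG) ^ (1 / p)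

/-- Membership in the martingale Hardy space `H_p(G)`. -/
def MemHp (p : ℝ) (F : ℕ → G → ℝ) : Prop := IsDyadicMartingale F ∧ HpNorm p F < ⊤

/-- `L_p` quasi-norm of a function on `G`. -/
def LpN (p : ℝ) (f : G → ℝ) : ℝ≥0∞ := (∫⁻ x, (‖f x‖₊ : ℝ≥0∞) ^ p ∂μG) ^ (1 / p)

/-- Weak `L_p` quasi-norm: `‖f‖_{L_{p,∞}} = sup_{λ>0} λ μ(|f|>λ)^{1/p}`. -/
def wLp (p : ℝ) (f : G → ℝ) : ℝ≥0∞ :=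
  ⨆ t : ℝ≥0, (t : ℝ≥0∞) * (μG {x | (t : ℝ) < |f x|}) ^ (1 / p)

/-- Walsh–Fourier coefficient of an integrable function. -/
def fcoeff (f : G → ℝ) (j : ℕ) : ℝ := ∫ x, f x * walsh j x ∂μG

/-- Partial sums of the Walsh–Fourier series of a function. -/
def Sf (f : G → ℝ) (m : ℕ) (x : G) : ℝ := ∑ j ∈ Finset.range m, fcoeff f j * walsh j x

/-- Fejér means of the Walsh–Fourier series of a function. -/
def σf (f : G → ℝ) (n : ℕ) (x : G) : ℝ := (1 / n) * ∑ k ∈ Finset.Icc 1 n, Sf f k x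

/-- The martingale `(S_{2^m} g)_m` generated by a function `g`; used to interpret the
`H_p` norm of a function such as `σ_n F`. -/
def funMart (g : G → ℝ) : ℕ → G → ℝ := fun m => Sf g (2 ^ m)

/-- Modulus of continuity in `H_p`: `ω_{H_p}(1/2^n, F) = ‖F - S_{2^n} F‖_{H_p}`,
where `F - S_{2^n}F` is the martingale with `m`-th term `F_m - S_{min(2^n, 2^m)}F`. -/
def ωHp (p : ℝ) (n : ℕ) (F : ℕ → G → ℝ) : ℝ≥0∞ :=
  HpNorm p (fun m x => F m x - S F (min (2 ^ n) (2 ^ m)) x)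

/-- The a.e. limit of a martingale (as a limsup, which agrees a.e. with the limit
for martingales in `H_p`). -/
def mLim (F : ℕ → G → ℝ) (x : G) : ℝ := Filter.limsup (fun m => F m x) Filter.atTop

/-- The set `E_l := I_{l+1}(e_{l-1} + e_l)`, with the convention
`I_1(e_{-1}+e_0) = I_2(e_0+e_1)` for `l = 0`. -/
def Eset (l : ℕ) : Set G :=
  if l = 0 then cyl 2 (e 0 + e 1) else cyl (l + 1) (e (l - 1) + e l)


lemma rade_add (k : ℕ) (x y : G) : rade k (x + y) = rade k x * rade k y := by
  have h : ∀ a b : ZMod 2, (-1 : ℤ) ^ (a + b).val = (-1) ^ a.val * (-1) ^ b.val := by decide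
  simp only [rade, Pi.add_apply]
  exact_mod_cast h (x k) (y k)

lemma rade_eq_one {k : ℕ} {x : G} (h : x k = 0) : rade k x = 1 := by simp [rade, h]

lemma rade_eq_neg_one {k : ℕ} {x : G} (h : x k = 1) : rade k x = -1 := by
  simp [rade, h, ZMod.val_one]

lemma abs_rade (k : ℕ) (x : G) : |rade k x| = 1 := by simp [rade]

lemma continuous_rade (k : ℕ) : Continuous (rade k) :=
  (continuous_of_discreteTopology (f := fun a : ZMod 2 => (-1 : ℝ) ^ a.val)).comp
    (continuous_apply k)

lemma walsh_eq_prod {n K : ℕ} (h : n < 2 ^ K) (x : G) :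
    walsh n x = ∏ k ∈ Finset.range K, if n.testBit k then rade k x else 1 := by
  have key : ∀ L, n < 2 ^ L → ∀ J, L ≤ J →
      ∏ k ∈ Finset.range J, (if n.testBit k then rade k x else 1) =
      ∏ k ∈ Finset.range L, if n.testBit k then rade k x else 1 := by
    intro L hL J hJ
    refine (Finset.prod_subset (Finset.range_mono hJ) fun k _ hk => ?_).symm
    rw [if_neg]
    rw [Nat.testBit_lt_two_pow (hL.trans_le (Nat.pow_le_pow_right two_pos (by simpa using hk)))]
    simp
  have h1 : n < 2 ^ (n + 1) :=
    Nat.lt_two_pow_self.trans_le (Nat.pow_le_pow_right two_pos (by omega))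
  rw [walsh, ← key _ h1 _ (le_max_left _ K), key _ h _ (le_max_right _ _)]

lemma walsh_mul_add {t : ℕ} (h : ℕ) {r : ℕ} (hr : r < 2 ^ t) (x : G) :
    walsh (2 ^ t * h + r) x = walsh (2 ^ t * h) x * walsh r x := by
  obtain ⟨K, hK⟩ : ∃ K, 2 ^ t * h + r < 2 ^ K := ⟨_, Nat.lt_two_pow_self⟩
  rw [walsh_eq_prod hK, walsh_eq_prod (n := r) (K := K) (by omega),
    walsh_eq_prod (n := 2 ^ t * h) (K := K) (by omega), ← Finset.prod_mul_distrib]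
  refine Finset.prod_congr rfl fun k _ => ?_
  rw [Nat.testBit_two_pow_mul_add h hr, Nat.testBit_two_pow_mul]
  by_cases hk : k < t
  · simp [hk, Nat.not_le.mpr hk]
  · have : r.testBit k = false :=
      Nat.testBit_lt_two_pow (hr.trans_le (Nat.pow_le_pow_right two_pos (by omega)))
    simp [hk, this, Nat.le_of_not_lt hk]

lemma walsh_two_pow (N : ℕ) (x : G) : walsh (2 ^ N) x = rade N x := by
  rw [walsh_eq_prod (K := N + 1) (Nat.pow_lt_pow_right one_lt_two (by omega)),
    Finset.prod_range_succ, Finset.prod_eq_one]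
  · simp
  · intro k hk
    have := Finset.mem_range.mp hk
    simp [this.ne']

lemma walsh_two_pow_add {N i : ℕ} (hi : i < 2 ^ N) (x : G) :
    walsh (2 ^ N + i) x = rade N x * walsh i x := by
  simpa [walsh_two_pow] using walsh_mul_add 1 hi x

lemma abs_walsh (n : ℕ) (x : G) : |walsh n x| = 1 := by
  rw [walsh, Finset.abs_prod]
  refine Finset.prod_eq_one fun k _ => ?_
  split_ifs <;> simp [abs_rade]

lemma walsh_add (n : ℕ) (x y : G) : walsh n (x + y) = walsh n x * walsh n y := by
  simp only [walsh, ← Finset.prod_mul_distrib]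
  refine Finset.prod_congr rfl fun k _ => ?_
  split_ifs <;> simp [rade_add]

lemma continuous_walsh (n : ℕ) : Continuous (walsh n) := by
  unfold walsh
  refine continuous_finsetProd _ fun k _ => ?_
  split_ifs
  exacts [continuous_rade k, continuous_const]

lemma walsh_congr {n i : ℕ} (hi : i < 2 ^ n) {x y : G} (h : ∀ k < n, x k = y k) :
    walsh i x = walsh i y := by
  rw [walsh_eq_prod hi, walsh_eq_prod hi]
  refine Finset.prod_congr rfl fun k hk => ?_
  simp [rade, h k (Finset.mem_range.mp hk)]

lemma walsh_zero_right (i : ℕ) : walsh i 0 = 1 := by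
  refine Finset.prod_eq_one fun k _ => ?_
  split_ifs <;> simp [rade]

lemma walsh_of_mem_I₀ {n i : ℕ} (hi : i < 2 ^ n) {x : G} (h : x ∈ I₀ n) : walsh i x = 1 := by
  rw [walsh_congr hi (y := 0) h, walsh_zero_right]

lemma walsh_e (i t : ℕ) : walsh i (e t) = if i.testBit t then -1 else 1 := by
  obtain ⟨K, hK⟩ : ∃ K, i < 2 ^ K := ⟨_, Nat.lt_two_pow_self⟩
  rw [walsh_eq_prod (hK.trans_le (Nat.pow_le_pow_right two_pos (le_max_left K (t + 1)))),
    Finset.prod_eq_single_of_mem t (by simp)]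
  · rw [rade_eq_neg_one (by simp [e])]
  · intro k _ hk
    rw [rade_eq_one (by simp [e, hk])]
    simp

instance : IsProbabilityMeasure μG :=
  ⟨Measure.addHaarMeasure_self (K₀ := ⟨⟨Set.univ, isCompact_univ⟩, by simp⟩)⟩

instance : μG.IsAddLeftInvariant := by unfold μG; infer_instance

lemma integral_walsh_mul_walsh (i j : ℕ) :
    ∫ x, walsh i x * walsh j x ∂μG = if i = j then 1 else 0 := by
  split_ifs with hij
  · subst hij
    have : ∀ x, walsh i x * walsh i x = 1 := fun x => by
      rw [← abs_mul_abs_self, abs_walsh, one_mul]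
    simp [this]
  · obtain ⟨t, ht⟩ := Nat.exists_testBit_ne_of_ne hij
    have h := integral_add_left_eq_self (μ := μG) (fun x => walsh i x * walsh j x) (e t)
    have h2 : ∀ x, walsh i (e t + x) * walsh j (e t + x) = -(walsh i x * walsh j x) := by
      intro x
      rw [walsh_add, walsh_add, walsh_e, walsh_e]
      cases hi : i.testBit t <;> cases hj : j.testBit t <;> simp_all
    simp only [h2, integral_neg] at h
    linarith

lemma integrable_of_continuous {f : G → ℝ} (hf : Continuous f) : Integrable f μG :=
  hf.integrable_of_hasCompactSupport (HasCompactSupport.of_compactSpace f)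

lemma mem_cyl {n : ℕ} {x y : G} : y ∈ cyl n x ↔ ∀ k < n, y k = x k := Iff.rfl

lemma measurableSet_cyl (n : ℕ) (x : G) : MeasurableSet (cyl n x) := by
  have : cyl n x = ⋂ k ∈ Set.Iio n, (fun y : G => y k) ⁻¹' {x k} := by
    ext y; simp [cyl]
  rw [this]
  refine IsClosed.measurableSet (isClosed_biInter fun k _ => ?_)
  exact (isClosed_discrete _).preimage (continuous_apply k)

lemma measure_cyl_eq (n : ℕ) (x : G) : μG (cyl n x) = μG (I₀ n) := by
  rw [← measure_preimage_add μG x (cyl n x)]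
  congr 1
  ext y
  simp [cyl, I₀]

lemma measure_I₀ (n : ℕ) : μG (I₀ n) = (2 ^ n)⁻¹ := by
  induction n with
  | zero => simp [I₀, cyl]
  | succ n ih =>
    have hu : I₀ n = cyl (n + 1) 0 ∪ cyl (n + 1) (e n) := by
      ext y
      have h2 : ∀ a : ZMod 2, a = 0 ∨ a = 1 := by decide
      simp only [I₀, Set.mem_union, mem_cyl, Nat.lt_succ_iff_lt_or_eq, or_imp, forall_and,
        forall_eq]
      have he : ∀ k < n, e n k = 0 := fun k hk => by simp [e, hk.ne]
      constructor
      · intro h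
        rcases h2 (y n) with h0 | h0
        · exact Or.inl ⟨h, h0⟩
        · exact Or.inr ⟨fun k hk => by rw [he k hk]; exact h k hk, by simp [e, h0]⟩
      · rintro (h | h)
        · exact h.1
        · exact fun k hk => by rw [h.1 k hk, he k hk]; rfl
    have hd : Disjoint (cyl (n + 1) 0) (cyl (n + 1) (e n)) := by
      rw [Set.disjoint_left]
      intro y h h'
      have := (h n (by omega)).symm.trans (h' n (by omega))
      simp [e] at this
    rw [hu, measure_union hd (measurableSet_cyl _ _), measure_cyl_eq, measure_cyl_eq, ← two_mul]
      at ih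
    have h2 : (2 : ℝ≥0∞) ≠ ⊤ := by simp
    rw [pow_succ', ENNReal.mul_inv (by simp) (by simp), ← ih, ← mul_assoc,
      ENNReal.inv_mul_cancel (by simp) h2, one_mul]

lemma measure_cyl (n : ℕ) (x : G) : μG (cyl n x) = (2 ^ n)⁻¹ := by
  rw [measure_cyl_eq, measure_I₀]

/-- The points with zero coordinates below `s` and coordinates `s` and `s + 1` equal to one. -/
def doublePeak (s : ℕ) : Set G := cyl (s + 2) (e s + e (s + 1))

lemma doublePeak_apply_of_lt {s k : ℕ} {x : G} (hx : x ∈ doublePeak s) (hk : k < s) :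
    x k = 0 := by
  have h : k ≠ s + 1 := by omega
  rw [hx k (by omega)]
  simp [e, hk.ne, h]

lemma doublePeak_apply_self {s : ℕ} {x : G} (hx : x ∈ doublePeak s) : x s = 1 := by
  rw [hx s (by omega)]
  simp [e]

lemma doublePeak_apply_succ {s : ℕ} {x : G} (hx : x ∈ doublePeak s) : x (s + 1) = 1 := by
  rw [hx (s + 1) (by omega)]
  simp [e]

lemma measurableSet_doublePeak (s : ℕ) : MeasurableSet (doublePeak s) := measurableSet_cyl _ _

lemma measure_doublePeak (s : ℕ) : μG (doublePeak s) = (2 ^ (s + 2))⁻¹ := measure_cyl _ _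

lemma eq_of_mem_doublePeak {s t : ℕ} {x : G} (hs : x ∈ doublePeak s) (ht : x ∈ doublePeak t) :
    s = t := by
  by_contra h
  rcases Nat.lt_or_gt_of_ne h with h | h
  · have := (doublePeak_apply_of_lt ht h).symm.trans (doublePeak_apply_self hs)
    simp at this
  · have := (doublePeak_apply_of_lt hs h).symm.trans (doublePeak_apply_self ht)
    simp at this

section Kernel

variable {s : ℕ} {x : G}

lemma walsh_on_doublePeak (hx : x ∈ doublePeak s) (h : ℕ) {r : ℕ} (hr : r < 4 * 2 ^ s) :
    walsh (4 * 2 ^ s * h + r) x = walsh (4 * 2 ^ s * h) x *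
      (if r < 2 ^ s then 1 else if r < 3 * 2 ^ s then -1 else 1) := by
  have h0 : ∀ i < 2 ^ s, walsh i x = 1 := fun i hi =>
    walsh_of_mem_I₀ hi fun k hk => by simpa using doublePeak_apply_of_lt hx hk
  have h1 : ∀ i < 2 ^ s, walsh (2 ^ s + i) x = -1 := fun i hi => by
    rw [walsh_two_pow_add hi, h0 i hi, rade_eq_neg_one (doublePeak_apply_self hx), mul_one]
  have h2 : ∀ i < 2 ^ (s + 1), walsh (2 ^ (s + 1) + i) x = -walsh i x := fun i hi => by
    rw [walsh_two_pow_add hi, rade_eq_neg_one (doublePeak_apply_succ hx), neg_one_mul]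
  have h4 : 4 * 2 ^ s = 2 ^ (s + 2) := by ring
  have h5 : 2 ^ (s + 1) = 2 * 2 ^ s := by ring
  rw [h4] at hr ⊢
  rw [walsh_mul_add h hr]
  rw [← h4] at hr
  congr 1
  split_ifs with hr1 hr2
  · exact h0 r hr1
  · by_cases hr3 : r < 2 * 2 ^ s
    · obtain ⟨a, rfl⟩ := Nat.exists_eq_add_of_le (Nat.le_of_not_lt hr1)
      exact h1 a (by omega)
    · obtain ⟨a, rfl⟩ := Nat.exists_eq_add_of_le (Nat.le_of_not_lt hr3)
      rw [← h5, h2 a (by omega), h0 a (by omega)]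
  · obtain ⟨a, rfl⟩ := Nat.exists_eq_add_of_le (Nat.le_of_not_lt hr2)
    rw [show 3 * 2 ^ s + a = 2 ^ (s + 1) + (2 ^ s + a) by omega, h2 _ (by omega), h1 a (by omega),
      neg_neg]

lemma D_add_on_doublePeak (hx : x ∈ doublePeak s) (h : ℕ) (hD : D (4 * 2 ^ s * h) x = 0)
    {r : ℕ} (hr : r ≤ 4 * 2 ^ s) :
    D (4 * 2 ^ s * h + r) x = walsh (4 * 2 ^ s * h) x *
      (if r ≤ 2 ^ s then (r : ℝ) else if r ≤ 3 * 2 ^ s then 2 * 2 ^ s - r else r - 4 * 2 ^ s) := by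
  induction r with
  | zero => simp [hD]
  | succ r ih =>
    have h1 : D (4 * 2 ^ s * h + (r + 1)) x =
        D (4 * 2 ^ s * h + r) x + walsh (4 * 2 ^ s * h + r) x := by
      rw [D, ← add_assoc, Finset.sum_range_succ, D]
    rw [h1, ih (by omega), walsh_on_doublePeak hx h (by omega), ← mul_add]
    congr 1
    rcases lt_trichotomy r (2 ^ s) with h2 | h2 | h2
    · rw [if_pos h2.le, if_pos h2, if_pos (Nat.succ_le_of_lt h2)]
      push_cast; ring
    · subst h2
      rw [if_pos le_rfl, if_neg (lt_irrefl _), if_pos (by omega), if_neg (by omega),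
        if_pos (by omega)]
      push_cast; ring
    rw [if_neg (by omega : ¬ r ≤ 2 ^ s), if_neg (by omega : ¬ r < 2 ^ s),
      if_neg (by omega : ¬ r + 1 ≤ 2 ^ s)]
    rcases lt_trichotomy r (3 * 2 ^ s) with h3 | h3 | h3
    · rw [if_pos h3.le, if_pos h3, if_pos (Nat.succ_le_of_lt h3)]
      push_cast; ring
    · subst h3
      rw [if_pos le_rfl, if_neg (lt_irrefl _), if_neg (by omega)]
      push_cast; ring
    · rw [if_neg (by omega), if_neg (by omega), if_neg (by omega)]
      push_cast; ring

lemma D_mul_on_doublePeak (hx : x ∈ doublePeak s) (h : ℕ) : D (4 * 2 ^ s * h) x = 0 := by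
  induction h with
  | zero => simp [D]
  | succ h ih =>
    have hQ := Nat.two_pow_pos s
    rw [mul_add, mul_one, D_add_on_doublePeak hx h ih le_rfl, if_neg (by omega), if_neg (by omega)]
    push_cast
    ring

lemma sum_D_add_on_doublePeak (hx : x ∈ doublePeak s) (h : ℕ) {r : ℕ} (hr : r ≤ 4 * 2 ^ s) :
    2 * ∑ k ∈ Finset.range r, D (4 * 2 ^ s * h + k) x = walsh (4 * 2 ^ s * h) x *
      (if r ≤ 2 ^ s then (r * (r - 1) : ℝ)
        else if r ≤ 3 * 2 ^ s then (r - 2 ^ s - 1) * (3 * 2 ^ s - r) + (2 ^ s * (2 ^ s + 1))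
        else (4 * 2 ^ s - r) * (4 * 2 ^ s + 1 - r)) := by
  induction r with
  | zero => simp
  | succ r ih =>
    rw [Finset.sum_range_succ, mul_add, ih (by omega),
      D_add_on_doublePeak hx h (D_mul_on_doublePeak hx h) (by omega), mul_left_comm, ← mul_add]
    congr 1
    rcases lt_trichotomy r (2 ^ s) with h2 | h2 | h2
    · rw [if_pos h2.le, if_pos h2.le, if_pos (Nat.succ_le_of_lt h2)]
      push_cast; ring
    · subst h2
      rw [if_pos le_rfl, if_pos le_rfl, if_neg (by omega), if_pos (by omega)]
      push_cast; ring
    rw [if_neg (by omega : ¬ r ≤ 2 ^ s), if_neg (by omega : ¬ r ≤ 2 ^ s),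
      if_neg (by omega : ¬ r + 1 ≤ 2 ^ s)]
    rcases lt_trichotomy r (3 * 2 ^ s) with h3 | h3 | h3
    · rw [if_pos h3.le, if_pos h3.le, if_pos (Nat.succ_le_of_lt h3)]
      push_cast; ring
    · subst h3
      rw [if_pos le_rfl, if_pos le_rfl, if_neg (by omega)]
      push_cast; ring
    · rw [if_neg (by omega), if_neg (by omega), if_neg (by omega)]
      push_cast; ring

lemma sum_D_mul_on_doublePeak (hx : x ∈ doublePeak s) (h : ℕ) :
    ∑ k ∈ Finset.range (4 * 2 ^ s * h), D k x = 0 := by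
  induction h with
  | zero => simp
  | succ h ih =>
    have hQ := Nat.two_pow_pos s
    have h1 := sum_D_add_on_doublePeak hx h le_rfl
    rw [if_neg (by omega), if_neg (by omega)] at h1
    push_cast at h1
    rw [sub_self, zero_mul, mul_zero] at h1
    rw [mul_add, mul_one, Finset.sum_range_add, ih]
    linarith

/-- If the binary digits `s` and `s + 1` of `n` differ, the Fejér kernel of order `n` is large on
`doublePeak s`. -/
lemma le_abs_sum_D (hx : x ∈ doublePeak s) {n : ℕ} (hn : n.testBit s ≠ n.testBit (s + 1)) :
    (4 : ℝ) ^ s / 2 ≤ |∑ k ∈ Finset.range (n + 1), D k x| := by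
  have hQ := Nat.two_pow_pos s
  obtain ⟨h, r, rfl, hr1, hr2⟩ : ∃ h r, n = 4 * 2 ^ s * h + r ∧ 2 ^ s ≤ r ∧ r < 3 * 2 ^ s := by
    have hq : n / 2 ^ s % 4 = 1 ∨ n / 2 ^ s % 4 = 2 := by
      rw [Nat.testBit_eq_decide_div_mod_eq, Nat.testBit_eq_decide_div_mod_eq, pow_succ,
        ← Nat.div_div_eq_div_mul, ne_eq, decide_eq_decide] at hn
      omega
    have ha := Nat.mod_lt n hQ
    refine ⟨n / 2 ^ s / 4, 2 ^ s * (n / 2 ^ s % 4) + n % 2 ^ s, ?_, ?_, ?_⟩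
    · rw [mul_comm 4, mul_assoc, ← add_assoc, ← mul_add, Nat.div_add_mod, Nat.div_add_mod]
    · rcases hq with hq | hq <;> rw [hq] <;> omega
    · rcases hq with hq | hq <;> rw [hq] <;> omega
  have h1 := sum_D_add_on_doublePeak hx h (r := r + 1) (by omega)
  rw [if_neg (by omega), if_pos (by omega)] at h1
  rw [add_assoc, Finset.sum_range_add, sum_D_mul_on_doublePeak hx, zero_add]
  have h2 : (2 : ℝ) ^ s ≤ r := by exact_mod_cast hr1
  have h3 : (r : ℝ) + 1 ≤ 3 * 2 ^ s := by exact_mod_cast hr2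
  have h4 : (4 : ℝ) ^ s = 2 ^ s * 2 ^ s := by rw [← mul_pow]; norm_num
  have h5 : 0 ≤ ((r : ℝ) - 2 ^ s) * (3 * 2 ^ s - (r + 1)) :=
    mul_nonneg (by linarith) (by linarith)
  have h6 := congrArg abs h1
  have h7 : (0 : ℝ) < 2 ^ s := by positivity
  rw [abs_mul, abs_mul, abs_walsh, one_mul, abs_two] at h6
  have h8 := le_abs_self ((((r + 1 : ℕ) : ℝ) - 2 ^ s - 1) * (3 * 2 ^ s - ((r + 1 : ℕ) : ℝ)) +
    (2 ^ s * (2 ^ s + 1)))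
  rw [← h6] at h8
  push_cast at h8
  nlinarith

end Kernel

lemma V_le (n : ℕ) : V n ≤ 3 +
    ((Finset.range (hi n - 1)).filter fun s => n.testBit s ≠ n.testBit (s + 1)).card := by
  have h1 : ((Finset.Icc 1 (n + 1)).filter fun k => n.testBit k ≠ n.testBit (k - 1)) ⊆
      (((Finset.range (hi n - 1)).filter fun s => n.testBit s ≠ n.testBit (s + 1)).image (· + 1)) ∪
        {hi n, hi n + 1} := by
    intro k hk
    simp only [Finset.mem_filter, Finset.mem_Icc] at hk
    obtain ⟨⟨hk1, -⟩, hk2⟩ := hk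
    simp only [Finset.mem_union, Finset.mem_image, Finset.mem_filter, Finset.mem_range,
      Finset.mem_insert, Finset.mem_singleton]
    by_cases h : k < hi n
    · exact Or.inl ⟨k - 1, ⟨by omega, by rw [Nat.sub_add_cancel hk1]; exact hk2.symm⟩, by omega⟩
    · refine Or.inr ?_
      by_contra h3
      have hlt : n < 2 ^ (k - 1) :=
        (Nat.lt_pow_succ_log_self one_lt_two n).trans_le
          (Nat.pow_le_pow_right two_pos (by simp only [hi] at h h3; omega))
      exact hk2 (by rw [Nat.testBit_lt_two_pow hlt,
        Nat.testBit_lt_two_pow (hlt.trans_le (Nat.pow_le_pow_right two_pos (by omega)))])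
  have h2 := (Finset.card_le_card h1).trans (Finset.card_union_le _ _)
  have h3 := Finset.card_image_le
    (s := (Finset.range (hi n - 1)).filter fun s => n.testBit s ≠ n.testBit (s + 1)) (f := (· + 1))
  have h4 := Finset.card_le_two (a := hi n) (b := hi n + 1)
  rw [V, ← Finset.card_filter]
  split_ifs <;> omega

lemma V_le_hi (n : ℕ) : V n ≤ hi n + 3 := by
  have h := Finset.card_filter_le (Finset.range (hi n - 1))
    fun s => n.testBit s ≠ n.testBit (s + 1)
  rw [Finset.card_range] at h
  have := V_le n
  omega

open Classical in
lemma D_two_pow (n : ℕ) (x : G) : D (2 ^ n) x = if x ∈ I₀ n then 2 ^ n else 0 := by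
  induction n with
  | zero => simp [D, I₀, cyl, walsh]
  | succ n ih =>
    have h1 : D (2 ^ (n + 1)) x = (1 + rade n x) * D (2 ^ n) x := by
      rw [D, pow_succ, mul_two, Finset.sum_range_add, add_mul, one_mul, D, Finset.mul_sum]
      congr 1
      exact Finset.sum_congr rfl fun i hi => walsh_two_pow_add (Finset.mem_range.mp hi) x
    have h2 : x ∈ I₀ (n + 1) ↔ x ∈ I₀ n ∧ x n = 0 := by
      simp only [I₀, mem_cyl, Nat.lt_succ_iff_lt_or_eq, or_imp, forall_and, forall_eq]
      rfl
    have h3 : ∀ a : ZMod 2, a ≠ 0 → a = 1 := by decide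
    rw [h1, ih, h2]
    by_cases h : x n = 0
    · rw [rade_eq_one h]
      by_cases h' : x ∈ I₀ n
      · rw [if_pos h', if_pos ⟨h', h⟩]
        ring
      · rw [if_neg h', if_neg fun hh => h' hh.1, mul_zero]
    · simp [rade_eq_neg_one (h3 _ h), h]

lemma D_two_pow_nonneg (n : ℕ) (x : G) : 0 ≤ D (2 ^ n) x := by
  rw [D_two_pow]
  split_ifs <;> positivity

lemma D_two_pow_sq (n : ℕ) (x : G) : D (2 ^ n) x ^ 2 = 2 ^ n * D (2 ^ n) x := by
  rw [D_two_pow]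
  split_ifs <;> ring

lemma D_two_pow_on_doublePeak {s n : ℕ} {x : G} (hx : x ∈ doublePeak s) (hn : s < n) :
    D (2 ^ n) x = 0 := by
  rw [D_two_pow, if_neg]
  intro h
  have := (h s hn).symm.trans (doublePeak_apply_self hx)
  simp at this

/-- The Walsh coefficients that equal `d N ^ 2 * 2 ^ N` on the dyadic block `[2 ^ N, 2 ^ (N + 1))`
and vanish at `0`. -/
def blockCoeff (d : ℕ → ℝ) (i : ℕ) : ℝ := if i = 0 then 0 else d (hi i) ^ 2 * 2 ^ hi i

/-- The dyadic martingale with Walsh coefficients `blockCoeff d`. -/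
def blockMart (d : ℕ → ℝ) (n : ℕ) (x : G) : ℝ :=
  ∑ i ∈ Finset.range (2 ^ n), blockCoeff d i * walsh i x

section BlockMart

variable (d : ℕ → ℝ)

lemma blockCoeff_two_pow_add {N i : ℕ} (h : i < 2 ^ N) :
    blockCoeff d (2 ^ N + i) = d N ^ 2 * 2 ^ N := by
  have h1 : hi (2 ^ N + i) = N :=
    Nat.log_eq_of_pow_le_of_lt_pow (by omega) (by rw [pow_succ]; omega)
  have := Nat.two_pow_pos N
  rw [blockCoeff, if_neg (by omega), h1]

lemma mcoeff_blockMart (k : ℕ) : mcoeff (blockMart d) k = blockCoeff d k := by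
  have hk : k < 2 ^ (k + 1) :=
    Nat.lt_two_pow_self.trans_le (Nat.pow_le_pow_right two_pos (by omega))
  simp only [mcoeff, blockMart, Finset.sum_mul, mul_assoc]
  have hintegral : ∀ i, Integrable (fun x => blockCoeff d i * (walsh i x * walsh k x)) μG := fun i =>
    integrable_of_continuous
      (continuous_const.mul ((continuous_walsh i).mul (continuous_walsh k)))
  rw [integral_finsetSum _ fun i _ => hintegral i]
  simp only [integral_const_mul, integral_walsh_mul_walsh]
  simp [hk]

lemma S_blockMart (m : ℕ) (x : G) :
    S (blockMart d) m x = ∑ i ∈ Finset.range m, blockCoeff d i * walsh i x := by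
  simp only [S, mcoeff_blockMart]

lemma S_blockMart_two_pow (m : ℕ) (x : G) : S (blockMart d) (2 ^ m) x = blockMart d m x :=
  S_blockMart d _ x

lemma blockMart_zero (x : G) : blockMart d 0 x = 0 := by simp [blockMart, blockCoeff]

lemma blockMart_succ (n : ℕ) (x : G) :
    blockMart d (n + 1) x = blockMart d n x + rade n x * (d n * D (2 ^ n) x) ^ 2 := by
  rw [blockMart, pow_succ, mul_two, Finset.sum_range_add, blockMart, mul_pow, D_two_pow_sq, D,
    Finset.mul_sum, Finset.mul_sum, Finset.mul_sum]
  congr 1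
  refine Finset.sum_congr rfl fun i hi => ?_
  rw [walsh_two_pow_add (Finset.mem_range.mp hi), blockCoeff_two_pow_add d (Finset.mem_range.mp hi)]
  ring

lemma blockMart_congr (n : ℕ) {x y : G} (h : ∀ k < n, x k = y k) :
    blockMart d n x = blockMart d n y :=
  Finset.sum_congr rfl fun i hi => by rw [walsh_congr (Finset.mem_range.mp hi) h]

lemma isDyadicMartingale_blockMart : IsDyadicMartingale (blockMart d) := by
  refine ⟨fun n x y h => blockMart_congr d n h, fun n x => ?_⟩
  set y := Function.update x n (x n + 1) with hy
  have hxy : ∀ k < n, y k = x k := fun k hk => by simp [hy, hk.ne]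
  have h1 : rade n y = -rade n x := by
    have h2 : ∀ a : ZMod 2, (-1 : ℤ) ^ (a + 1).val = -(-1) ^ a.val := by decide
    simp only [rade, hy, Function.update_self]
    exact_mod_cast h2 (x n)
  have h3 : D (2 ^ n) y = D (2 ^ n) x :=
    Finset.sum_congr rfl fun i hi => walsh_congr (Finset.mem_range.mp hi) hxy
  rw [blockMart_succ, blockMart_succ, h1, h3, blockMart_congr d n hxy]
  ring

lemma abs_blockMart_sub_le (x : G) {n m : ℕ} (h : n ≤ m) :
    |blockMart d m x - blockMart d n x| ≤ ∑ N ∈ Finset.Ico n m, (d N * D (2 ^ N) x) ^ 2 := by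
  induction m, h using Nat.le_induction with
  | base => simp
  | succ m h ih =>
    rw [Finset.sum_Ico_succ_top h, blockMart_succ, add_sub_right_comm]
    refine (abs_add_le _ _).trans (add_le_add ih ?_)
    rw [abs_mul, abs_rade, one_mul, abs_of_nonneg (sq_nonneg _)]

variable {d}

open Classical in
lemma lintegral_D_two_pow (n : ℕ) : ∫⁻ x, ENNReal.ofReal (D (2 ^ n) x) ∂μG = 1 := by
  have h : ∀ x, ENNReal.ofReal (D (2 ^ n) x) = (I₀ n).indicator (fun _ => 2 ^ n) x := by
    intro x
    rw [D_two_pow, Set.indicator_apply]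
    split_ifs <;> simp [ENNReal.ofReal_pow]
  simp only [h]
  rw [lintegral_indicator_const (s := I₀ n) (measurableSet_cyl n 0), measure_I₀,
    ENNReal.mul_inv_cancel (by simp) (by simp)]

lemma continuous_D (n : ℕ) : Continuous (D n) :=
  continuous_finsetSum _ fun i _ => continuous_walsh i

lemma HpNorm_blockMart_sub_le (hd : ∀ N, 0 ≤ d N) (n : ℕ) :
    HpNorm (1 / 2) (fun m x => blockMart d m x - blockMart d (min n m) x) ≤
      (∑' N, if n ≤ N then ENNReal.ofReal (d N) else 0) ^ 2 := by
  have hpt : ∀ x, (⨆ m, (‖blockMart d m x - blockMart d (min n m) x‖₊ : ℝ≥0∞)) ^ (1 / 2 : ℝ) ≤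
      ∑' N, (if n ≤ N then ENNReal.ofReal (d N) else 0) * ENNReal.ofReal (D (2 ^ N) x) := by
    intro x
    rw [one_div, ENNReal.rpow_inv_le_iff two_pos]
    refine iSup_le fun m => ?_
    have hnn : ∀ N, 0 ≤ d N * D (2 ^ N) x := fun N => mul_nonneg (hd N) (D_two_pow_nonneg N x)
    have h1 : |blockMart d m x - blockMart d (min n m) x| ≤
        (∑ N ∈ Finset.Ico n m, d N * D (2 ^ N) x) ^ 2 := by
      rcases le_total n m with h | h
      · rw [min_eq_left h]
        exact (abs_blockMart_sub_le d x h).trans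
          (Finset.sum_sq_le_sq_sum_of_nonneg fun N _ => hnn N)
      · rw [min_eq_right h, sub_self, abs_zero]
        positivity
    rw [← enorm_eq_nnnorm, Real.enorm_eq_ofReal_abs]
    refine (ENNReal.ofReal_le_ofReal h1).trans ?_
    rw [ENNReal.ofReal_pow (Finset.sum_nonneg fun N _ => hnn N), ← ENNReal.rpow_natCast]
    refine ENNReal.rpow_le_rpow ?_ (by positivity)
    rw [ENNReal.ofReal_sum_of_nonneg fun N _ => hnn N]
    refine le_trans (le_of_eq ?_) (ENNReal.sum_le_tsum (Finset.Ico n m))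
    refine Finset.sum_congr rfl fun N hN => ?_
    rw [if_pos (Finset.mem_Ico.mp hN).1, ENNReal.ofReal_mul (hd N)]
  have h2 := lintegral_mono (μ := μG) hpt
  have hm : ∀ N, Measurable fun x => ENNReal.ofReal (D (2 ^ N) x) := fun N =>
    (continuous_D (2 ^ N)).measurable.ennreal_ofReal
  rw [lintegral_tsum fun N => ((hm N).const_mul _).aemeasurable] at h2
  simp only [lintegral_const_mul _ (hm _), lintegral_D_two_pow, mul_one] at h2
  rw [HpNorm, one_div_one_div, ← ENNReal.rpow_natCast]
  exact ENNReal.rpow_le_rpow h2 (by positivity)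

lemma HpNorm_blockMart_le (hd : ∀ N, 0 ≤ d N) :
    HpNorm (1 / 2) (blockMart d) ≤ (∑' N, ENNReal.ofReal (d N)) ^ 2 := by
  simpa [blockMart_zero] using HpNorm_blockMart_sub_le hd 0

lemma ωHp_blockMart_le (hd : ∀ N, 0 ≤ d N) (n : ℕ) :
    ωHp (1 / 2) n (blockMart d) ≤ (∑' N, if n ≤ N then ENNReal.ofReal (d N) else 0) ^ 2 := by
  refine le_trans (le_of_eq ?_) (HpNorm_blockMart_sub_le hd n)
  have h : ∀ m, min (2 ^ n) (2 ^ m) = 2 ^ min n m := fun m =>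
    (Monotone.map_min (pow_right_mono₀ one_le_two)).symm
  simp only [ωHp, h, S_blockMart_two_pow]

lemma mLim_blockMart_on_doublePeak {s n : ℕ} {x : G} (hx : x ∈ doublePeak s) (hn : s < n) :
    mLim (blockMart d) x = blockMart d n x := by
  have h : ∀ m ≥ n, blockMart d m x = blockMart d n x := by
    intro m hm
    induction m, hm using Nat.le_induction with
    | base => rfl
    | succ m hm ih =>
      rw [blockMart_succ, ih, D_two_pow_on_doublePeak hx (hn.trans_le hm)]
      ring
  refine (tendsto_const_nhds.congr' ?_).limsup_eq
  filter_upwards [eventually_ge_atTop n] with m hm using (h m hm).symm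

end BlockMart

section Fejer

variable {d : ℕ → ℝ}

lemma S_blockMart_eq (N : ℕ) {k : ℕ} (hk : k ≤ 2 ^ (N + 1)) (x : G) :
    S (blockMart d) k x = S (blockMart d) (min k (2 ^ N)) x +
      d N ^ 2 * 2 ^ N * (D k x - D (min k (2 ^ N)) x) := by
  rcases le_total k (2 ^ N) with h | h
  · simp [min_eq_left h]
  · obtain ⟨j, rfl⟩ := Nat.exists_eq_add_of_le h
    rw [min_eq_right h, S_blockMart, S_blockMart, D, D, Finset.sum_range_add,
      Finset.sum_range_add, add_sub_cancel_left, Finset.mul_sum]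
    congr 1
    refine Finset.sum_congr rfl fun i hi => ?_
    have := Finset.mem_range.mp hi
    rw [blockCoeff_two_pow_add d (by rw [pow_succ] at hk; omega)]

lemma abs_blockCoeff_le (hd : ∀ N, 0 ≤ d N) (hd1 : ∀ N, d N ≤ 1) {M i : ℕ} (h : i < 2 ^ M) :
    |blockCoeff d i| ≤ 2 ^ M := by
  rw [blockCoeff]
  split_ifs with h0
  · rw [abs_zero]; positivity
  · have h1 : (2 : ℝ) ^ hi i ≤ 2 ^ M := by
      exact_mod_cast (Nat.pow_log_le_self 2 h0).trans h.le
    have h2 : d (hi i) ^ 2 ≤ 1 := pow_le_one₀ (hd _) (hd1 _)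
    rw [abs_of_nonneg (by positivity)]
    calc d (hi i) ^ 2 * 2 ^ hi i ≤ 1 * 2 ^ M := by gcongr
      _ = 2 ^ M := one_mul _

lemma blockCoeff_eq_zero {M N i : ℕ} (hgap : ∀ L, M ≤ L → L < N → d L = 0) (h1 : 2 ^ M ≤ i)
    (h2 : i < 2 ^ N) : blockCoeff d i = 0 := by
  have h0 : i ≠ 0 := by have := Nat.two_pow_pos M; omega
  rw [blockCoeff, if_neg h0, hgap (hi i) (Nat.le_log_of_pow_le one_lt_two h1)
    (Nat.log_lt_of_lt_pow h0 h2)]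
  simp

lemma abs_S_sub_blockMart_le (hd : ∀ N, 0 ≤ d N) (hd1 : ∀ N, d N ≤ 1) {M N : ℕ} (hMN : M ≤ N)
    (hgap : ∀ L, M ≤ L → L < N → d L = 0) (k : ℕ) (x : G) :
    |S (blockMart d) (min k (2 ^ N)) x - blockMart d N x| ≤ if k < 2 ^ M then 4 ^ M else 0 := by
  have h2 : 2 ^ M ≤ 2 ^ N := Nat.pow_le_pow_right two_pos hMN
  rw [S_blockMart, blockMart, abs_sub_comm, ← Finset.sum_Ico_eq_sub _ (min_le_right _ _)]
  have h1 : ∑ i ∈ Finset.Ico (min k (2 ^ N)) (2 ^ N), blockCoeff d i * walsh i x =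
      ∑ i ∈ Finset.Ico (min k (2 ^ N)) (2 ^ M), blockCoeff d i * walsh i x := by
    refine (Finset.sum_subset (Finset.Ico_subset_Ico_right h2) fun i hi hi' => ?_).symm
    simp only [Finset.mem_Ico] at hi hi'
    rw [blockCoeff_eq_zero hgap (by omega) hi.2, zero_mul]
  rw [h1]
  split_ifs with hk
  · have h3 : ∀ i ∈ Finset.Ico (min k (2 ^ N)) (2 ^ M), |blockCoeff d i * walsh i x| ≤ 2 ^ M := by
      intro i hi
      rw [abs_mul, abs_walsh, mul_one]
      exact abs_blockCoeff_le hd hd1 (Finset.mem_Ico.mp hi).2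
    have h5 : (((2 ^ M - min k (2 ^ N) : ℕ)) : ℝ) ≤ 2 ^ M := by exact_mod_cast Nat.sub_le _ _
    have h6 : (4 : ℝ) ^ M = 2 ^ M * 2 ^ M := by rw [← mul_pow]; norm_num
    calc |∑ i ∈ Finset.Ico (min k (2 ^ N)) (2 ^ M), blockCoeff d i * walsh i x|
        ≤ ∑ i ∈ Finset.Ico (min k (2 ^ N)) (2 ^ M), |blockCoeff d i * walsh i x| :=
          Finset.abs_sum_le_sum_abs _ _
      _ ≤ (2 ^ M - min k (2 ^ N) : ℕ) * 2 ^ M := by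
          simpa [Nat.card_Ico] using Finset.sum_le_card_nsmul _ _ _ h3
      _ ≤ 4 ^ M := by rw [h6]; gcongr
  · rw [Finset.Ico_eq_empty (by omega), Finset.sum_empty, abs_zero]

lemma sum_D_min_on_doublePeak {s N n : ℕ} {x : G} (hx : x ∈ doublePeak s) (hs : s + 2 ≤ N)
    (hn : 2 ^ N ≤ n) : ∑ k ∈ Finset.range (n + 1), D (min k (2 ^ N)) x = 0 := by
  have hN : 2 ^ N = 4 * 2 ^ s * 2 ^ (N - (s + 2)) := by
    rw [show 4 * 2 ^ s = 2 ^ (s + 2) by ring, ← pow_add]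
    congr 1
    omega
  have h1 : ∑ k ∈ Finset.range (2 ^ N), D (min k (2 ^ N)) x = 0 := by
    rw [← sum_D_mul_on_doublePeak hx (2 ^ (N - (s + 2))), ← hN]
    refine Finset.sum_congr rfl fun k hk => ?_
    rw [min_eq_left (Finset.mem_range.mp hk).le]
  rw [← h1]
  refine (Finset.sum_subset (Finset.range_mono (by omega)) fun k _ hk => ?_).symm
  rw [min_eq_right (by simpa using hk), D_two_pow_on_doublePeak hx (by omega)]

lemma abs_σ_sub_le (hd : ∀ N, 0 ≤ d N) (hd1 : ∀ N, d N ≤ 1) {M n s : ℕ} (hn : n ≠ 0)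
    (hM : M ≤ hi n) (hgap : ∀ L, M ≤ L → L < hi n → d L = 0) (hs : s + 2 ≤ hi n) {x : G}
    (hx : x ∈ doublePeak s) :
    |σ (blockMart d) n x - mLim (blockMart d) x -
      d (hi n) ^ 2 * 2 ^ hi n / n * ∑ k ∈ Finset.range (n + 1), D k x| ≤ 8 ^ M / 2 ^ hi n := by
  set N := hi n with hN
  have hNn : 2 ^ N ≤ n := Nat.pow_log_le_self 2 hn
  have hnN : n < 2 ^ (N + 1) := Nat.lt_pow_succ_log_self one_lt_two n
  have hn0 : (0 : ℝ) < n := by exact_mod_cast Nat.pos_of_ne_zero hn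
  have hIcc : ∀ f : ℕ → ℝ, f 0 = 0 →
      ∑ k ∈ Finset.Icc 1 n, f k = ∑ k ∈ Finset.range (n + 1), f k := by
    intro f hf
    refine Finset.sum_subset (fun k hk => ?_) fun k hk hk' => ?_
    · simp only [Finset.mem_Icc] at hk
      simp only [Finset.mem_range]; omega
    · simp only [Finset.mem_Icc, Finset.mem_range] at hk hk'
      rw [show k = 0 by omega, hf]
  have h1 : ∑ k ∈ Finset.Icc 1 n, S (blockMart d) k x =
      ∑ k ∈ Finset.Icc 1 n, (S (blockMart d) (min k (2 ^ N)) x - blockMart d N x) +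
        n * blockMart d N x + d N ^ 2 * 2 ^ N * ∑ k ∈ Finset.range (n + 1), D k x := by
    have h2 : ∑ k ∈ Finset.Icc 1 n, D (min k (2 ^ N)) x = 0 := by
      rw [hIcc _ (by simp [D]), sum_D_min_on_doublePeak hx hs hNn]
    rw [← hIcc (fun k => D k x) (by simp [D]),
      Finset.sum_congr rfl fun k hk => S_blockMart_eq (d := d) N
        (by have := Finset.mem_Icc.mp hk; omega : k ≤ 2 ^ (N + 1)) x,
      Finset.sum_add_distrib, ← Finset.mul_sum, Finset.sum_sub_distrib, h2,
      Finset.sum_sub_distrib]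
    simp
  rw [mLim_blockMart_on_doublePeak hx (by omega : s < N), σ, h1]
  have h3 : 1 / (n : ℝ) * (∑ k ∈ Finset.Icc 1 n,
        (S (blockMart d) (min k (2 ^ N)) x - blockMart d N x) + n * blockMart d N x +
        d N ^ 2 * 2 ^ N * ∑ k ∈ Finset.range (n + 1), D k x) - blockMart d N x -
        d N ^ 2 * 2 ^ N / n * ∑ k ∈ Finset.range (n + 1), D k x =
      (∑ k ∈ Finset.Icc 1 n, (S (blockMart d) (min k (2 ^ N)) x - blockMart d N x)) / n := by
    field_simp
    ring
  rw [h3, abs_div, abs_of_pos hn0]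
  have h4 : |∑ k ∈ Finset.Icc 1 n, (S (blockMart d) (min k (2 ^ N)) x - blockMart d N x)| ≤
      8 ^ M := by
    refine (Finset.abs_sum_le_sum_abs _ _).trans ((Finset.sum_le_sum fun k _ =>
      abs_S_sub_blockMart_le hd hd1 hM hgap k x).trans ?_)
    have h5 : ((Finset.Icc 1 n).filter (· < 2 ^ M)).card ≤ 2 ^ M := by
      refine (Finset.card_le_card (t := Finset.range (2 ^ M)) fun k hk => ?_).trans_eq
        (Finset.card_range _)
      exact Finset.mem_range.mpr (Finset.mem_filter.mp hk).2
    rw [← Finset.sum_filter, Finset.sum_const, nsmul_eq_mul,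
      show (8 : ℝ) ^ M = 2 ^ M * 4 ^ M by rw [← mul_pow]; norm_num]
    gcongr
    exact_mod_cast h5
  have h6 : (2 : ℝ) ^ N ≤ n := by exact_mod_cast hNn
  gcongr

lemma le_LpN_σ_sub (hd : ∀ N, 0 ≤ d N) (hd1 : ∀ N, d N ≤ 1) {M n : ℕ} (hn : n ≠ 0)
    (hM : 3 * M + 10 ≤ hi n) (hgap : ∀ L, M ≤ L → L < hi n → d L = 0) (hV : 6 ≤ V n)
    (hdn : d (hi n) = 1 / V n) :
    ENNReal.ofReal (1 / 32) ^ 2 ≤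
      LpN (1 / 2) fun x => σ (blockMart d) n x - mLim (blockMart d) x := by
  set h : G → ℝ := fun x => σ (blockMart d) n x - mLim (blockMart d) x with hh
  set T := (Finset.range (hi n - 1)).filter fun s => n.testBit s ≠ n.testBit (s + 1) with hT
  have hsmall : (8 : ℝ) ^ M / 2 ^ hi n ≤ 1 / 1024 := by
    rw [div_le_div_iff₀ (by positivity) (by positivity), one_mul,
      show (8 : ℝ) ^ M * 1024 = 2 ^ (3 * M + 10) by rw [pow_add, pow_mul]; norm_num]
    exact pow_le_pow_right₀ one_le_two hM
  have hn0 : (0 : ℝ) < n := by exact_mod_cast Nat.pos_of_ne_zero hn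
  have hratio : (1 : ℝ) / 2 ≤ 2 ^ hi n / n := by
    have : (n : ℝ) < 2 ^ (hi n + 1) := by
      exact_mod_cast Nat.lt_pow_succ_log_self one_lt_two n
    rw [div_le_div_iff₀ two_pos hn0]
    rw [pow_succ] at this
    linarith
  have hreal : ∀ s ∈ T, ∀ x ∈ doublePeak s, d (hi n) * 2 ^ s / 2 ≤ √|h x| + 1 / 32 := by
    intro s hs x hx
    simp only [hT, Finset.mem_filter, Finset.mem_range] at hs
    have h1 : |h x - d (hi n) ^ 2 * 2 ^ hi n / n * ∑ k ∈ Finset.range (n + 1), D k x| ≤ 1 / 1024 :=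
      (abs_σ_sub_le hd hd1 hn (by omega) hgap (by omega : s + 2 ≤ hi n) hx).trans hsmall
    have h2 : (d (hi n) * 2 ^ s / 2) ^ 2 ≤
        |d (hi n) ^ 2 * 2 ^ hi n / n * ∑ k ∈ Finset.range (n + 1), D k x| := by
      have h3 : d (hi n) ^ 2 * (1 / 2) ≤ d (hi n) ^ 2 * (2 ^ hi n / n) := by gcongr
      rw [abs_mul, mul_div_assoc (d (hi n) ^ 2), abs_of_nonneg (by positivity)]
      calc (d (hi n) * 2 ^ s / 2) ^ 2 = d (hi n) ^ 2 * (1 / 2) * (4 ^ s / 2) := by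
            rw [show (4 : ℝ) ^ s = 2 ^ s * 2 ^ s by rw [← mul_pow]; norm_num]; ring
        _ ≤ _ := mul_le_mul h3 (le_abs_sum_D hx hs.2) (by positivity) (by positivity)
    have h4 := abs_sub_abs_le_abs_sub
      (d (hi n) ^ 2 * 2 ^ hi n / n * ∑ k ∈ Finset.range (n + 1), D k x) (h x)
    rw [abs_sub_comm _ (h x)] at h4
    refine le_of_sq_le_sq ?_ (by positivity)
    have h5 := Real.sq_sqrt (abs_nonneg (h x))
    have h6 := Real.sqrt_nonneg |h x|
    nlinarith
  have hpt : ∀ x, ∑ s ∈ T, (doublePeak s).indicator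
      (fun _ => ENNReal.ofReal (d (hi n) * 2 ^ s / 2)) x ≤
      (‖h x‖₊ : ℝ≥0∞) ^ (1 / 2 : ℝ) + ENNReal.ofReal (1 / 32) := by
    intro x
    by_cases hx : ∃ s ∈ T, x ∈ doublePeak s
    · obtain ⟨s, hs, hxs⟩ := hx
      rw [Finset.sum_eq_single_of_mem s hs fun t _ hts =>
        Set.indicator_of_notMem (fun hxt => hts (eq_of_mem_doublePeak hxt hxs)) _,
        Set.indicator_of_mem hxs, ← enorm_eq_nnnorm, Real.enorm_eq_ofReal_abs,
        ENNReal.ofReal_rpow_of_nonneg (abs_nonneg _) (by norm_num), ← Real.sqrt_eq_rpow,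
        ← ENNReal.ofReal_add (Real.sqrt_nonneg _) (by norm_num)]
      exact ENNReal.ofReal_le_ofReal (hreal s hs x hxs)
    · rw [Finset.sum_eq_zero fun s hs =>
        Set.indicator_of_notMem (fun hxs => hx ⟨s, hs, hxs⟩) _]
      exact zero_le
  have hintegral := lintegral_mono (μ := μG) hpt
  rw [lintegral_finsetSum _ fun s _ => measurable_const.indicator (measurableSet_doublePeak s),
    lintegral_add_right _ measurable_const, lintegral_const, measure_univ, mul_one] at hintegral
  have hterm : ∀ s, ∫⁻ x, (doublePeak s).indicator
      (fun _ => ENNReal.ofReal (d (hi n) * 2 ^ s / 2)) x ∂μG = ENNReal.ofReal (d (hi n) / 8) := by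
    intro s
    rw [lintegral_indicator_const (measurableSet_doublePeak s), measure_doublePeak,
      show (2 ^ (s + 2) : ℝ≥0∞)⁻¹ = ENNReal.ofReal ((2 ^ (s + 2))⁻¹) by
        rw [ENNReal.ofReal_inv_of_pos (by positivity), ENNReal.ofReal_pow two_pos.le]; simp,
      ← ENNReal.ofReal_mul (by have := hd (hi n); positivity)]
    congr 1
    rw [pow_add]
    field_simp
    norm_num
  have hcard : (1 : ℝ) / 16 ≤ T.card * (d (hi n) / 8) := by
    have h1 : (V n : ℝ) ≤ 3 + T.card := by exact_mod_cast V_le n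
    have h2 : (6 : ℝ) ≤ V n := by exact_mod_cast hV
    rw [hdn, div_div, mul_one_div, div_le_div_iff₀ (by norm_num) (by linarith)]
    linarith
  simp only [hterm, Finset.sum_const, nsmul_eq_mul] at hintegral
  rw [← ENNReal.ofReal_natCast, ← ENNReal.ofReal_mul (by positivity)] at hintegral
  have hfin := (ENNReal.ofReal_le_ofReal hcard).trans hintegral
  rw [show (1 : ℝ) / 16 = 1 / 32 + 1 / 32 by norm_num,
    ENNReal.ofReal_add (by norm_num) (by norm_num)] at hfin
  have hfin' := (ENNReal.add_le_add_iff_right ENNReal.ofReal_ne_top).mp hfin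
  rw [LpN, one_div_one_div, ← ENNReal.rpow_natCast]
  exact ENNReal.rpow_le_rpow hfin' (by positivity)

end Fejer

section Selection

variable {nk : ℕ → ℕ}

lemma exists_V_record (hV : ∀ C : ℕ, ∃ k, C ≤ V (nk k)) (C : ℕ) :
    ∃ k, C ≤ V (nk k) ∧ ∀ i, hi (nk i) ≤ hi (nk k) → V (nk i) ≤ V (nk k) := by
  classical
  have hex : ∃ N k, hi (nk k) = N ∧ C ≤ V (nk k) := by
    obtain ⟨k, hk⟩ := hV C
    exact ⟨_, k, rfl, hk⟩
  obtain ⟨k₀, hk₀, hC₀⟩ := Nat.find_spec hex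
  set N := Nat.find hex
  let P : ℕ → Prop := fun v => ∃ k, hi (nk k) = N ∧ V (nk k) = v
  have hP : P (V (nk k₀)) := ⟨k₀, hk₀, rfl⟩
  have hle : ∀ v, P v → v ≤ N + 3 := by
    rintro v ⟨k, hk, rfl⟩
    rw [← hk]
    exact V_le_hi _
  obtain ⟨k, hk, hkv⟩ := Nat.findGreatest_spec (hle _ hP) hP
  have hmax : ∀ i, hi (nk i) = N → V (nk i) ≤ V (nk k) := fun i hi' => by
    rw [hkv]
    have : P (V (nk i)) := ⟨i, hi', rfl⟩
    exact Nat.le_findGreatest (hle _ this) this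
  have hCk : C ≤ V (nk k) := hC₀.trans (hmax k₀ hk₀)
  refine ⟨k, hCk, fun i hik => ?_⟩
  rcases (hk ▸ hik).lt_or_eq with h | h
  · by_contra! hlt
    exact Nat.find_min hex h ⟨i, rfl, hCk.trans hlt.le⟩
  · exact hmax i h

lemma exists_V_record_seq (hV : ∀ C : ℕ, ∃ k, C ≤ V (nk k)) :
    ∃ u : ℕ → ℕ, 6 ≤ V (nk (u 0)) ∧
      (∀ j, 2 * V (nk (u j)) + 3 * hi (nk (u j)) + 16 ≤ V (nk (u (j + 1)))) ∧
      ∀ j i, hi (nk i) ≤ hi (nk (u j)) → V (nk i) ≤ V (nk (u j)) := by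
  choose r hr hr' using exists_V_record hV
  refine ⟨fun j => Nat.rec (r 6) (fun _ p => r (2 * V (nk p) + 3 * hi (nk p) + 16)) j,
    hr 6, fun j => hr _, fun j => ?_⟩
  cases j with
  | zero => exact hr' _
  | succ j => exact hr' _

end Selection

lemma mul_tsum_extend_le {N v : ℕ → ℕ} (hN : StrictMono N) (hv0 : ∀ j, 0 < v j)
    (hv : ∀ j, 2 * v j ≤ v (j + 1)) (n w : ℕ) (hw : ∀ j, n ≤ N j → w ≤ v j) :
    (w : ℝ≥0∞) * ∑' L, (if n ≤ L then
      ENNReal.ofReal (Function.extend N (fun j => 1 / (v j : ℝ)) 0 L) else 0) ≤ 2 := by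
  classical
  have hex : ∃ j, n ≤ N j := ⟨n, hN.le_apply⟩
  set j₀ := Nat.find hex with hj₀
  have hgrow : ∀ i, 2 ^ i * w ≤ v (j₀ + i) := by
    intro i
    induction i with
    | zero => simpa using hw j₀ (Nat.find_spec hex)
    | succ i ih =>
      have := hv (j₀ + i)
      rw [← add_assoc, pow_succ]
      linarith
  set f : ℕ → ℝ≥0∞ := fun L => if n ≤ L then
      ENNReal.ofReal (Function.extend N (fun j => 1 / (v j : ℝ)) 0 L) else 0 with hf
  have hsupp : Function.support f ⊆ Set.range fun i => N (j₀ + i) := by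
    intro L hL
    rw [Function.mem_support] at hL
    by_cases hnL : n ≤ L
    · by_cases hLN : ∃ j, N j = L
      · obtain ⟨j, rfl⟩ := hLN
        have : j₀ ≤ j := Nat.find_min' hex hnL
        exact ⟨j - j₀, by simp only [Nat.add_sub_cancel' this]⟩
      · simp [hf, hnL, Function.extend_apply' _ _ _ hLN] at hL
    · simp [hf, hnL] at hL
  have hinj : Function.Injective fun i => N (j₀ + i) := fun a b hab => by
    have := hN.injective hab
    omega
  rw [← hinj.tsum_eq hsupp, ← ENNReal.tsum_mul_left, ← ENNReal.tsum_geometric_two]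
  refine ENNReal.tsum_le_tsum fun i => ?_
  have h1 : n ≤ N (j₀ + i) := (Nat.find_spec hex).trans (hN.monotone (by omega))
  have h2 : (0 : ℝ) < v (j₀ + i) := by exact_mod_cast hv0 _
  have h3 : (2 : ℝ) ^ i * w ≤ v (j₀ + i) := by exact_mod_cast hgrow i
  simp only [hf, h1, if_true]
  rw [hN.injective.extend_apply, ← ENNReal.ofReal_natCast, ← ENNReal.ofReal_mul (by positivity),
    show (2⁻¹ : ℝ≥0∞) = ENNReal.ofReal 2⁻¹ by rw [ENNReal.ofReal_inv_of_pos two_pos]; simp,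
    ← ENNReal.ofReal_pow (by norm_num)]
  refine ENNReal.ofReal_le_ofReal ?_
  rw [mul_one_div, inv_pow, ← one_div, div_le_div_iff₀ h2 (by positivity)]
  linarith

/-- sharpness — there is `F ∈ H_{1/2}` with
`ω_{H_{1/2}}(1/2^{|n_k|}, F) = O(1/V(n_k)²)` and `‖σ_{n_k}F - F‖_{1/2} ↛ 0`. -/
theorem fejer_divergence_modulus_half (nk : ℕ → ℕ) (hpos : ∀ k, 1 ≤ nk k)
    (hV : ∀ C : ℕ, ∃ k, C ≤ V (nk k)) :
    ∃ F : ℕ → G → ℝ, MemHp (1/2) F ∧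
      (∃ C : ℝ≥0, ∀ k, (V (nk k) : ℝ≥0∞) ^ 2 * ωHp (1/2) (hi (nk k)) F ≤ C) ∧
      ¬ Tendsto (fun k => LpN (1/2) (fun x => σ F (nk k) x - mLim F x)) atTop (𝓝 0) := by
  obtain ⟨u, hu0, hu, hrec⟩ := exists_V_record_seq hV
  set N : ℕ → ℕ := fun j => hi (nk (u j)) with hNdef
  set v : ℕ → ℕ := fun j => V (nk (u j)) with hvdef
  have hgapN : ∀ j, 3 * (N j + 1) + 10 ≤ N (j + 1) := fun j => by
    have h1 : v (j + 1) ≤ N (j + 1) + 3 := V_le_hi _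
    have h2 : 2 * v j + 3 * N j + 16 ≤ v (j + 1) := hu j
    omega
  have hN : StrictMono N := strictMono_nat_of_lt_succ fun j => by have := hgapN j; omega
  have hv6 : ∀ j, 6 ≤ v j := fun j => by
    cases j with
    | zero => exact hu0
    | succ j => have := hu j; simp only [hvdef]; omega
  have hv2 : ∀ j, 2 * v j ≤ v (j + 1) := fun j => by
    have : 2 * v j + 3 * N j + 16 ≤ v (j + 1) := hu j
    omega
  set d : ℕ → ℝ := Function.extend N (fun j => 1 / (v j : ℝ)) 0 with hd
  have hdN : ∀ j, d (N j) = 1 / v j := fun j => hN.injective.extend_apply _ _ j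
  have hd' : ∀ L, (¬∃ j, N j = L) → d L = 0 := fun L hL => Function.extend_apply' _ _ _ hL
  have hd01 : ∀ L, 0 ≤ d L ∧ d L ≤ 1 := fun L => by
    by_cases hL : ∃ j, N j = L
    · obtain ⟨j, rfl⟩ := hL
      have h1 : (6 : ℝ) ≤ v j := by exact_mod_cast hv6 j
      rw [hdN]
      exact ⟨by positivity, by rw [div_le_one (by linarith)]; linarith⟩
    · rw [hd' L hL]
      norm_num
  have htail := mul_tsum_extend_le hN (fun j => by have := hv6 j; omega) hv2
  refine ⟨blockMart d, ⟨isDyadicMartingale_blockMart d, ?_⟩, ⟨4, fun k => ?_⟩, fun hlim => ?_⟩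
  · have h1 := htail 0 1 fun j _ => by have := hv6 j; omega
    simp only [Nat.cast_one, one_mul, zero_le, if_true] at h1
    refine (HpNorm_blockMart_le fun L => (hd01 L).1).trans_lt ?_
    exact ENNReal.pow_lt_top (h1.trans_lt (by simp))
  · have h1 := htail (hi (nk k)) (V (nk k)) fun j hj => hrec j k hj
    calc (V (nk k) : ℝ≥0∞) ^ 2 * ωHp (1 / 2) (hi (nk k)) (blockMart d)
        ≤ (V (nk k) : ℝ≥0∞) ^ 2 *
          (∑' L, if hi (nk k) ≤ L then ENNReal.ofReal (d L) else 0) ^ 2 := by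
          gcongr
          exact ωHp_blockMart_le (fun L => (hd01 L).1) _
      _ ≤ 2 ^ 2 := by
          rw [← mul_pow]
          gcongr
      _ = ((4 : ℝ≥0) : ℝ≥0∞) := by norm_num
  · have hinj : Function.Injective fun j => u (j + 1) := fun a b hab => by
      have h1 : N (a + 1) = N (b + 1) := congrArg (fun i => hi (nk i)) hab
      have := hN.injective h1
      omega
    have h1 := ge_of_tendsto' (hlim.comp hinj.nat_tendsto_atTop) fun j =>
      le_LpN_σ_sub (fun L => (hd01 L).1) (fun L => (hd01 L).2)
        (Nat.one_le_iff_ne_zero.mp (hpos (u (j + 1)))) (hgapN j) (fun L h2 h3 => hd' L ?_)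
        (hv6 (j + 1)) (hdN (j + 1))
    · have h2 : (0 : ℝ≥0∞) < ENNReal.ofReal (1 / 32) ^ 2 := by
        have : (0 : ℝ≥0∞) < ENNReal.ofReal (1 / 32) := ENNReal.ofReal_pos.mpr (by norm_num)
        positivity
      exact absurd h1 h2.not_ge
    · rintro ⟨i, rfl⟩
      have h4 := hN.lt_iff_lt.mp (Nat.lt_of_succ_le h2)
      have h5 := hN.lt_iff_lt.mp h3
      omega
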